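/- (Andrews–Askey integral) For 0<q<1 and complex a,b,c,d with max{|ac|,|ad|,|bc|,|bd|}<1 and c,d ≠ 0, ∫_c^d ((qt/c;q)_∞ (qt/d;q)_∞ / ((at;q)_∞ (bt;q)_∞)) d_q t = d(1-q)(q;q)_∞ (dq/c;q)_∞ (c/d;q)_∞ (abcd;q)_∞ / ((ac;q)_∞ (ad;q)_∞ (bc;q)_∞ (bd;q)_∞), where the q-integral from c to d is defined by ∫_c^d f(t) d_q t = d(1-q)∑_{n=0}^∞ f(dq^n) q^n − c(1-q)∑_{n=0}^∞ f(cq^n) q^n. -/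

import Mathlib

open Finset

noncomputable def qPoch (q a : ℂ) (n : ℕ) : ℂ := ∏ k ∈ Finset.range n, (1 - a * q ^ k)

noncomputable def qPochInf (q a : ℂ) : ℂ := ∏' k : ℕ, (1 - a * q ^ k)

noncomputable def cauchyP (q x y : ℂ) (n : ℕ) : ℂ := ∏ k ∈ Finset.range n, (x - q ^ k * y)

noncomputable def qBinom (q : ℂ) (n k : ℕ) : ℂ := qPoch q q n / (qPoch q q k * qPoch q q (n - k))

noncomputable def Dq (q : ℂ) (f : ℂ → ℂ) : ℂ → ℂ := fun a => (f a - f (q * a)) / a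

noncomputable def thetaq (q : ℂ) (f : ℂ → ℂ) : ℂ → ℂ := fun a => (f (a / q) - f a) / (a / q)

noncomputable def qIntegral (q : ℂ) (f : ℂ → ℂ) (c d : ℂ) : ℂ :=
  (1 - q) * ∑' n : ℕ, q ^ n * (d * f (d * q ^ n) - c * f (c * q ^ n))

/-!
Write `w_{a,b}(t) = (qt/c, qt/d; q)_∞ / (at, bt; q)_∞` and `I(a, b) = ∫_c^d w_{a,b}(t) d_q t`.
The weight satisfies the Pearson-type equation
`(1 - qt/c)(1 - qt/d) w(qt) = (1 - at)(1 - bt) w(t)`, so the function `(1 - t/c)(1 - t/d) w(t)`,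
which vanishes at `c` and at `d`, has an explicit `q`-derivative; integrating it gives
`(1 - abcd) I(aq, b) = (1 - ac)(1 - ad) I(a, b)`. Iterating `a ↦ aq` reduces `I(a, b)` to `I(0, b)`,
and by the symmetry in `a` and `b` to `I(0, 0)`. The latter is read off from the same formula at
`a = q/c`, `b = q/d`, where the weight is identically `1`; this choice is unavailable only when
`c/d` is a nonzero integral power of `q`, and then `I(0, 0)` is a finite sum of zeros.
-/

open Filter Topology

section InfiniteProduct

variable {q : ℂ}

lemma summable_norm_neg_mul_pow (hq : ‖q‖ < 1) (x : ℂ) :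
    Summable fun k : ℕ ↦ ‖-(x * q ^ k)‖ := by
  simpa only [norm_neg, norm_mul, norm_pow] using
    (summable_geometric_of_lt_one (norm_nonneg q) hq).mul_left ‖x‖

lemma multipliable_one_sub_mul_pow (hq : ‖q‖ < 1) (x : ℂ) :
    Multipliable fun k : ℕ ↦ 1 - x * q ^ k := by
  simpa only [sub_eq_add_neg] using
    multipliable_one_add_of_summable (summable_norm_neg_mul_pow hq x)

lemma tendsto_qPoch (hq : ‖q‖ < 1) (x : ℂ) :
    Tendsto (qPoch q x) atTop (𝓝 (qPochInf q x)) :=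
  (multipliable_one_sub_mul_pow hq x).hasProd.tendsto_prod_nat

lemma qPochInf_eq_one_sub_mul (hq : ‖q‖ < 1) (x : ℂ) :
    qPochInf q x = (1 - x) * qPochInf q (q * x) := by
  have shift (k : ℕ) : 1 - x * q ^ (k + 1) = 1 - q * x * q ^ k := by ring
  have hmul : Multipliable fun k : ℕ ↦ 1 - x * q ^ (k + 1) := by
    simpa only [shift] using multipliable_one_sub_mul_pow hq (q * x)
  rw [qPochInf, tprod_eq_zero_mul' (f := fun k : ℕ ↦ 1 - x * q ^ k) hmul, pow_zero, mul_one]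
  simp only [shift, qPochInf]

@[simp]
lemma qPochInf_zero_right (q : ℂ) : qPochInf q 0 = 1 := by simp [qPochInf]

lemma qPochInf_eq_zero_iff (hq : ‖q‖ < 1) {x : ℂ} :
    qPochInf q x = 0 ↔ ∃ n : ℕ, x * q ^ n = 1 := by
  refine ⟨fun h ↦ ?_, fun ⟨n, hn⟩ ↦ tprod_of_exists_eq_zero ⟨n, sub_eq_zero.2 hn.symm⟩⟩
  contrapose! h
  simpa only [qPochInf, sub_eq_add_neg] using
    tprod_one_add_ne_zero_of_summable
      (fun n ↦ by simpa only [← sub_eq_add_neg, sub_ne_zero] using (h n).symm)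
      (summable_norm_neg_mul_pow hq x)

lemma qPochInf_ne_zero_of_norm_lt_one (hq : ‖q‖ < 1) {x : ℂ} (hx : ‖x‖ < 1) :
    qPochInf q x ≠ 0 := by
  rw [Ne, qPochInf_eq_zero_iff hq]
  rintro ⟨n, hn⟩
  refine absurd (congrArg norm hn) (ne_of_lt ?_)
  rw [norm_mul, norm_pow, norm_one]
  exact mul_lt_one_of_nonneg_of_lt_one_left (norm_nonneg x) hx (pow_le_one₀ (norm_nonneg q) hq.le)

lemma qPochInf_mul_pow_ne_zero (hq : ‖q‖ < 1) {x : ℂ} (hx : qPochInf q x ≠ 0) (n : ℕ) :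
    qPochInf q (x * q ^ n) ≠ 0 := by
  contrapose! hx
  obtain ⟨m, hm⟩ := (qPochInf_eq_zero_iff hq).1 hx
  exact (qPochInf_eq_zero_iff hq).2 ⟨n + m, by rw [pow_add, ← mul_assoc, hm]⟩

lemma continuous_qPochInf (hq : ‖q‖ < 1) : Continuous (qPochInf q) := by
  refine continuous_iff_continuousAt.2 fun x ↦ ?_
  have hbound : ∀ᶠ y in 𝓝 x, ∀ k : ℕ, ‖-(y * q ^ k)‖ ≤ (‖x‖ + 1) * ‖q‖ ^ k := by
    filter_upwards [continuous_norm.continuousAt.eventually_le_const (lt_add_one ‖x‖)] with y hy k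
    rw [norm_neg, norm_mul, norm_pow]
    gcongr
  have hlim := tendsto_tprod_one_add_of_dominated_convergence
    ((summable_geometric_of_lt_one (norm_nonneg q) hq).mul_left (‖x‖ + 1))
    (fun k ↦ (by fun_prop : Continuous fun y : ℂ ↦ -(y * q ^ k)).continuousAt) hbound
  simp only [← sub_eq_add_neg] at hlim
  exact hlim

end InfiniteProduct

section JacksonIntegral

/-- The points `c qⁿ` and `d qⁿ` at which `∫_c^d f(t) d_q t` samples `f`, together with their limit
`0`, so that the set is compact for `‖q‖ < 1` and functions continuous on it are `q`-integrable. -/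
def qLattice (q c d : ℂ) : Set ℂ :=
  insert 0 (Set.range fun n : ℕ ↦ c * q ^ n) ∪ insert 0 (Set.range fun n : ℕ ↦ d * q ^ n)

variable {q c d : ℂ} {f g G : ℂ → ℂ}

lemma zero_mem_qLattice : 0 ∈ qLattice q c d := .inl (Set.mem_insert 0 _)

lemma left_mul_pow_mem_qLattice (n : ℕ) : c * q ^ n ∈ qLattice q c d :=
  .inl (Set.mem_insert_of_mem 0 ⟨n, rfl⟩)

lemma right_mul_pow_mem_qLattice (n : ℕ) : d * q ^ n ∈ qLattice q c d :=
  .inr (Set.mem_insert_of_mem 0 ⟨n, rfl⟩)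

lemma forall_mem_qLattice {p : ℂ → Prop} :
    (∀ t ∈ qLattice q c d, p t) ↔ p 0 ∧ ∀ n : ℕ, p (c * q ^ n) ∧ p (d * q ^ n) := by
  simp only [qLattice, Set.mem_union, Set.mem_insert_iff, Set.mem_range]
  grind

lemma pow_mul_mem_qLattice {t : ℂ} (ht : t ∈ qLattice q c d) (N : ℕ) :
    q ^ N * t ∈ qLattice q c d := by
  revert t
  have shift (e : ℂ) (n : ℕ) : q ^ N * (e * q ^ n) = e * q ^ (N + n) := by ring
  simp only [forall_mem_qLattice, shift, mul_zero]
  exact ⟨zero_mem_qLattice, fun n ↦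
    ⟨left_mul_pow_mem_qLattice (N + n), right_mul_pow_mem_qLattice (N + n)⟩⟩

lemma tendsto_const_mul_pow (hq : ‖q‖ < 1) (c : ℂ) :
    Tendsto (fun n : ℕ ↦ c * q ^ n) atTop (𝓝 0) := by
  simpa only [mul_zero] using (tendsto_pow_atTop_nhds_zero_of_norm_lt_one hq).const_mul c

lemma isCompact_qLattice (hq : ‖q‖ < 1) : IsCompact (qLattice q c d) :=
  (tendsto_const_mul_pow hq c).isCompact_insert_range.union
    (tendsto_const_mul_pow hq d).isCompact_insert_range

lemma tendsto_of_continuousOn_qLattice (hf : ContinuousOn f (qLattice q c d)) {u : ℕ → ℂ}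
    (hu : Tendsto u atTop (𝓝 0)) (hmem : ∀ n, u n ∈ qLattice q c d) :
    Tendsto (fun n ↦ f (u n)) atTop (𝓝 (f 0)) :=
  (hf 0 zero_mem_qLattice).tendsto.comp
    (tendsto_nhdsWithin_of_tendsto_nhds_of_eventually_within _ hu (.of_forall hmem))

lemma norm_qIntegral_term_le {C : ℝ} (hC : ∀ t ∈ qLattice q c d, ‖f t‖ ≤ C) (n : ℕ) :
    ‖q ^ n * (d * f (d * q ^ n) - c * f (c * q ^ n))‖ ≤ ‖q‖ ^ n * (‖d‖ * C + ‖c‖ * C) := by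
  rw [norm_mul, norm_pow]
  gcongr
  refine (norm_sub_le _ _).trans ?_
  rw [norm_mul, norm_mul]
  gcongr
  exacts [hC _ (right_mul_pow_mem_qLattice n), hC _ (left_mul_pow_mem_qLattice n)]

lemma summable_qIntegral_term (hq : ‖q‖ < 1) (hf : ContinuousOn f (qLattice q c d)) :
    Summable fun n : ℕ ↦ q ^ n * (d * f (d * q ^ n) - c * f (c * q ^ n)) := by
  obtain ⟨C, hC⟩ := (isCompact_qLattice hq).exists_bound_of_continuousOn hf
  exact .of_norm_bounded ((summable_geometric_of_lt_one (norm_nonneg q) hq).mul_right _)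
    (norm_qIntegral_term_le hC)

lemma qIntegral_congr (h : Set.EqOn f g (qLattice q c d)) :
    qIntegral q f c d = qIntegral q g c d := by
  simp only [qIntegral, h (left_mul_pow_mem_qLattice _), h (right_mul_pow_mem_qLattice _)]

lemma qIntegral_symm (q : ℂ) (f : ℂ → ℂ) (c d : ℂ) : qIntegral q f d c = -qIntegral q f c d := by
  rw [qIntegral, qIntegral, ← mul_neg, ← tsum_neg]
  congr! 3
  ring

lemma qIntegral_const_mul (k : ℂ) : qIntegral q (fun t ↦ k * f t) c d = k * qIntegral q f c d := by
  rw [qIntegral, qIntegral, mul_left_comm, ← tsum_mul_left (a := k)]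
  congr! 3
  ring

lemma qIntegral_sub (hq : ‖q‖ < 1) (hf : ContinuousOn f (qLattice q c d))
    (hg : ContinuousOn g (qLattice q c d)) :
    qIntegral q (fun t ↦ f t - g t) c d = qIntegral q f c d - qIntegral q g c d := by
  rw [qIntegral, qIntegral, qIntegral, ← mul_sub,
    ← (summable_qIntegral_term hq hf).tsum_sub (summable_qIntegral_term hq hg)]
  congr! 3
  ring

lemma qIntegral_one (hq : ‖q‖ < 1) (c d : ℂ) : qIntegral q (fun _ ↦ 1) c d = d - c := by
  have hq1 : 1 - q ≠ 0 := sub_ne_zero.2 fun h ↦ by simp [← h] at hq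
  simp only [qIntegral, mul_one, tsum_mul_right, tsum_geometric_of_norm_lt_one hq]
  exact mul_inv_cancel_left₀ hq1 _

/-- The fundamental theorem of `q`-calculus; dividing the hypothesis by `(1 - q) * t` shows that
`f` is the Jackson `q`-derivative of `G`. -/
lemma qIntegral_eq_sub_of_sub_eq_mul (hq : ‖q‖ < 1) (hf : ContinuousOn f (qLattice q c d))
    (hG : ContinuousOn G (qLattice q c d))
    (h : ∀ t ∈ qLattice q c d, G t - G (q * t) = (1 - q) * t * f t) :
    qIntegral q f c d = G d - G c := by
  let u (n : ℕ) : ℂ := G (d * q ^ n) - G (c * q ^ n)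
  have hu : Tendsto u atTop (𝓝 0) := by
    have hlim {e : ℂ} (he : ∀ n : ℕ, e * q ^ n ∈ qLattice q c d) :=
      tendsto_of_continuousOn_qLattice hG (tendsto_const_mul_pow hq e) he
    simpa only [sub_self] using
      (hlim right_mul_pow_mem_qLattice).sub (hlim left_mul_pow_mem_qLattice)
  have term_eq (n : ℕ) :
      (1 - q) * (q ^ n * (d * f (d * q ^ n) - c * f (c * q ^ n))) = u n - u (n + 1) := by
    have hd := h _ (right_mul_pow_mem_qLattice n)
    have hc := h _ (left_mul_pow_mem_qLattice n)
    rw [mul_left_comm, ← pow_succ'] at hd hc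
    linear_combination hc - hd
  have hsum := (summable_qIntegral_term hq hf).mul_left (1 - q)
  have htel : Tendsto (fun N ↦ ∑ n ∈ range N, (u n - u (n + 1))) atTop (𝓝 (u 0)) := by
    simpa only [sum_range_sub', sub_zero] using hu.const_sub (u 0)
  rw [qIntegral, ← tsum_mul_left]
  refine tendsto_nhds_unique hsum.hasSum.tendsto_sum_nat ?_
  simpa only [term_eq, u, pow_zero, mul_one] using htel

lemma tendsto_qIntegral_mul_comp_pow_mul (hq : ‖q‖ < 1) (hf : ContinuousOn f (qLattice q c d))
    (hg : ContinuousOn g (qLattice q c d)) :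
    Tendsto (fun N : ℕ ↦ qIntegral q (fun t ↦ f t * g (q ^ N * t)) c d) atTop
      (𝓝 (qIntegral q (fun t ↦ f t * g 0) c d)) := by
  obtain ⟨C, hC⟩ := (isCompact_qLattice hq).exists_bound_of_continuousOn hf
  obtain ⟨D, hD⟩ := (isCompact_qLattice hq).exists_bound_of_continuousOn hg
  have hbound (N : ℕ) : ∀ t ∈ qLattice q c d, ‖f t * g (q ^ N * t)‖ ≤ C * D := fun t ht ↦ by
    rw [norm_mul]
    exact mul_le_mul (hC t ht) (hD _ (pow_mul_mem_qLattice ht N)) (norm_nonneg _)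
      ((norm_nonneg _).trans (hC t ht))
  have hlim : ∀ t ∈ qLattice q c d,
      Tendsto (fun N : ℕ ↦ f t * g (q ^ N * t)) atTop (𝓝 (f t * g 0)) := fun t ht ↦ by
    refine (tendsto_of_continuousOn_qLattice hg ?_ (pow_mul_mem_qLattice ht)).const_mul (f t)
    simpa only [mul_comm t] using tendsto_const_mul_pow hq t
  refine (tendsto_tsum_of_dominated_convergence
    ((summable_geometric_of_lt_one (norm_nonneg q) hq).mul_right _) (fun n ↦ ?_)
    (.of_forall fun N ↦ norm_qIntegral_term_le (hbound N))).const_mul (1 - q)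
  exact (((hlim _ (right_mul_pow_mem_qLattice n)).const_mul d).sub
    ((hlim _ (left_mul_pow_mem_qLattice n)).const_mul c)).const_mul (q ^ n)

lemma qIntegral_right_mul_pow (hq : ‖q‖ < 1) {m : ℕ}
    (hf : ContinuousOn f (qLattice q c (c * q ^ m))) :
    qIntegral q f c (c * q ^ m) = -((1 - q) * ∑ n ∈ range m, q ^ n * (c * f (c * q ^ n))) := by
  let u (n : ℕ) : ℂ := q ^ n * (c * f (c * q ^ n))
  have hu : Summable u := by
    obtain ⟨C, hC⟩ := (isCompact_qLattice hq).exists_bound_of_continuousOn hf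
    refine .of_norm_bounded
      ((summable_geometric_of_lt_one (norm_nonneg q) hq).mul_right (‖c‖ * C)) fun n ↦ ?_
    rw [norm_mul, norm_mul, norm_pow]
    gcongr
    exact hC _ (left_mul_pow_mem_qLattice n)
  have term_eq (n : ℕ) :
      q ^ n * (c * q ^ m * f (c * q ^ m * q ^ n) - c * f (c * q ^ n)) = u (n + m) - u n := by
    simp only [u, show c * q ^ m * q ^ n = c * q ^ (n + m) by ring]
    ring
  have hshift : ∑ n ∈ range m, u n + ∑' n, u (n + m) = ∑' n, u n := hu.sum_add_tsum_nat_add m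
  simp only [qIntegral, term_eq, ((summable_nat_add_iff m).2 hu).tsum_sub hu]
  linear_combination (1 - q) * hshift

end JacksonIntegral

section AndrewsAskey

/-- The integrand `(qt/c, qt/d; q)_∞ / (at, bt; q)_∞` of the Andrews–Askey integral. -/
noncomputable def askeyWeight (q a b c d t : ℂ) : ℂ :=
  qPochInf q (q * t / c) * qPochInf q (q * t / d) / (qPochInf q (a * t) * qPochInf q (b * t))

/-- The Andrews–Askey integral `∫_c^d (qt/c, qt/d; q)_∞ / (at, bt; q)_∞ d_q t`, as a function of its
parameters. -/
noncomputable def askeyIntegral (q a b c d : ℂ) : ℂ := qIntegral q (askeyWeight q a b c d) c d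

variable {q a b c d : ℂ}

lemma askeyIntegral_comm (q a b c d : ℂ) : askeyIntegral q a b c d = askeyIntegral q b a c d := by
  unfold askeyIntegral askeyWeight
  simp only [mul_comm (qPochInf q (a * _))]

lemma askeyIntegral_swap_endpoints (q a b c d : ℂ) :
    askeyIntegral q a b d c = -askeyIntegral q a b c d := by
  rw [askeyIntegral, qIntegral_symm, askeyIntegral]
  unfold askeyWeight
  simp only [mul_comm (qPochInf q (q * _ / d))]

lemma askeyWeight_eq_zero_left_mul (q a b c d t : ℂ) :
    askeyWeight q a b c d t = askeyWeight q 0 b c d t * (qPochInf q (a * t))⁻¹ := by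
  simp only [askeyWeight, zero_mul, qPochInf_zero_right, div_eq_mul_inv, mul_inv, inv_one]
  ring

lemma forall_qPochInf_mul_ne_zero (hq : ‖q‖ < 1) (hc : qPochInf q (a * c) ≠ 0)
    (hd : qPochInf q (a * d) ≠ 0) : ∀ t ∈ qLattice q c d, qPochInf q (a * t) ≠ 0 := by
  simp only [forall_mem_qLattice, mul_zero, qPochInf_zero_right, ← mul_assoc]
  exact ⟨one_ne_zero, fun n ↦
    ⟨qPochInf_mul_pow_ne_zero hq hc n, qPochInf_mul_pow_ne_zero hq hd n⟩⟩

lemma forall_qPochInf_mul_pow_mul_ne_zero (ha : ∀ t ∈ qLattice q c d, qPochInf q (a * t) ≠ 0)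
    (N : ℕ) : ∀ t ∈ qLattice q c d, qPochInf q (a * q ^ N * t) ≠ 0 := fun t ht ↦ by
  simpa only [mul_assoc] using ha _ (pow_mul_mem_qLattice ht N)

lemma continuousOn_askeyWeight (hq : ‖q‖ < 1)
    (ha : ∀ t ∈ qLattice q c d, qPochInf q (a * t) ≠ 0)
    (hb : ∀ t ∈ qLattice q c d, qPochInf q (b * t) ≠ 0) :
    ContinuousOn (askeyWeight q a b c d) (qLattice q c d) := by
  have := continuous_qPochInf hq
  unfold askeyWeight
  exact .div (by fun_prop) (by fun_prop) fun t ht ↦ mul_ne_zero (ha t ht) (hb t ht)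

lemma askeyWeight_mul_left (hq : ‖q‖ < 1) {t : ℂ} (ha : qPochInf q (a * t) ≠ 0) :
    askeyWeight q (a * q) b c d t = (1 - a * t) * askeyWeight q a b c d t := by
  have hstep := qPochInf_eq_one_sub_mul hq (a * t)
  have hfac : 1 - a * t ≠ 0 := left_ne_zero_of_mul (hstep ▸ ha)
  rw [askeyWeight, askeyWeight, hstep, show a * q * t = q * (a * t) by ring, mul_assoc (1 - a * t),
    ← mul_div_assoc, mul_div_mul_left _ _ hfac]

lemma askeyWeight_pearson (hq : ‖q‖ < 1) {t : ℂ} (ha : qPochInf q (a * t) ≠ 0)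
    (hb : qPochInf q (b * t) ≠ 0) :
    (1 - q * t / c) * (1 - q * t / d) * askeyWeight q a b c d (q * t) =
      (1 - a * t) * (1 - b * t) * askeyWeight q a b c d t := by
  have step (x : ℂ) := qPochInf_eq_one_sub_mul hq x
  have hafac : 1 - a * t ≠ 0 := left_ne_zero_of_mul (step _ ▸ ha)
  have hbfac : 1 - b * t ≠ 0 := left_ne_zero_of_mul (step _ ▸ hb)
  calc (1 - q * t / c) * (1 - q * t / d) * askeyWeight q a b c d (q * t)
      = qPochInf q (q * t / c) * qPochInf q (q * t / d) /
          (qPochInf q (q * (a * t)) * qPochInf q (q * (b * t))) := by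
        rw [askeyWeight, step (q * t / c), step (q * t / d), mul_div_assoc q (q * t) c,
          mul_div_assoc q (q * t) d, mul_left_comm a, mul_left_comm b]
        ring
    _ = (1 - a * t) * (1 - b * t) * askeyWeight q a b c d t := by
        rw [askeyWeight, step (a * t), step (b * t), mul_mul_mul_comm, ← mul_div_assoc,
          mul_div_mul_left _ _ (mul_ne_zero hafac hbfac)]

lemma askeyIntegral_mul_left (hq : ‖q‖ < 1) (hc : c ≠ 0) (hd : d ≠ 0)
    (ha : ∀ t ∈ qLattice q c d, qPochInf q (a * t) ≠ 0)
    (hb : ∀ t ∈ qLattice q c d, qPochInf q (b * t) ≠ 0) :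
    (1 - a * b * c * d) * askeyIntegral q (a * q) b c d =
      (1 - a * c) * (1 - a * d) * askeyIntegral q a b c d := by
  let w := askeyWeight q a b c d
  let w' := askeyWeight q (a * q) b c d
  let G (t : ℂ) : ℂ := (1 - q) * (a * c * d) * ((1 - t / c) * (1 - t / d) * w t)
  have hw : ContinuousOn w (qLattice q c d) := continuousOn_askeyWeight hq ha hb
  have hw' : ContinuousOn w' (qLattice q c d) :=
    continuousOn_askeyWeight hq
      (by simpa only [pow_one] using forall_qPochInf_mul_pow_mul_ne_zero ha 1) hb
  have hderiv : ∀ t ∈ qLattice q c d, G t - G (q * t) =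
      (1 - q) * t * ((1 - a * c) * (1 - a * d) * w t - (1 - a * b * c * d) * w' t) := by
    intro t ht
    have hfac : a * c * d * ((1 - t / c) * (1 - t / d) - (1 - a * t) * (1 - b * t)) =
        t * ((1 - a * c) * (1 - a * d) - (1 - a * b * c * d) * (1 - a * t)) := by
      field_simp
      ring
    simp only [G, w, w', askeyWeight_pearson hq (ha t ht) (hb t ht),
      askeyWeight_mul_left hq (ha t ht)]
    linear_combination (1 - q) * askeyWeight q a b c d t * hfac
  have hzero := qIntegral_eq_sub_of_sub_eq_mul hq (by fun_prop) (by fun_prop) hderiv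
  rw [qIntegral_sub hq (by fun_prop) (by fun_prop), qIntegral_const_mul, qIntegral_const_mul]
    at hzero
  simp only [G, div_self hc, div_self hd, sub_self, zero_mul, mul_zero] at hzero
  exact (sub_eq_zero.1 hzero).symm

lemma askeyIntegral_mul_pow_left (hq : ‖q‖ < 1) (hc : c ≠ 0) (hd : d ≠ 0)
    (ha : ∀ t ∈ qLattice q c d, qPochInf q (a * t) ≠ 0)
    (hb : ∀ t ∈ qLattice q c d, qPochInf q (b * t) ≠ 0) (N : ℕ) :
    qPoch q (a * b * c * d) N * askeyIntegral q (a * q ^ N) b c d =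
      qPoch q (a * c) N * qPoch q (a * d) N * askeyIntegral q a b c d := by
  induction N with
  | zero => simp [qPoch]
  | succ N ih =>
    have step := askeyIntegral_mul_left hq hc hd (forall_qPochInf_mul_pow_mul_ne_zero ha N) hb
    simp only [qPoch, prod_range_succ] at ih ⊢
    rw [pow_succ, ← mul_assoc a]
    linear_combination (∏ k ∈ range N, (1 - a * b * c * d * q ^ k)) * step +
      (1 - a * q ^ N * c) * (1 - a * q ^ N * d) * ih

lemma tendsto_askeyIntegral_mul_pow_left (hq : ‖q‖ < 1)
    (ha : ∀ t ∈ qLattice q c d, qPochInf q (a * t) ≠ 0)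
    (hb : ∀ t ∈ qLattice q c d, qPochInf q (b * t) ≠ 0) :
    Tendsto (fun N : ℕ ↦ askeyIntegral q (a * q ^ N) b c d) atTop
      (𝓝 (askeyIntegral q 0 b c d)) := by
  have hinv : ContinuousOn (fun t ↦ (qPochInf q (a * t))⁻¹) (qLattice q c d) :=
    ((continuous_qPochInf hq).comp (continuous_const_mul a)).continuousOn.inv₀ ha
  have hlim := tendsto_qIntegral_mul_comp_pow_mul hq
    (continuousOn_askeyWeight (a := 0) hq (by simp) hb) hinv
  simp only [← mul_assoc, mul_zero, qPochInf_zero_right, inv_one, mul_one] at hlim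
  simp only [← askeyWeight_eq_zero_left_mul] at hlim
  exact hlim

lemma qPochInf_mul_askeyIntegral_zero_left (hq : ‖q‖ < 1) (hc : c ≠ 0) (hd : d ≠ 0)
    (ha : ∀ t ∈ qLattice q c d, qPochInf q (a * t) ≠ 0)
    (hb : ∀ t ∈ qLattice q c d, qPochInf q (b * t) ≠ 0) :
    qPochInf q (a * b * c * d) * askeyIntegral q 0 b c d =
      qPochInf q (a * c) * qPochInf q (a * d) * askeyIntegral q a b c d := by
  refine tendsto_nhds_unique
    ((tendsto_qPoch hq _).mul (tendsto_askeyIntegral_mul_pow_left hq ha hb)) ?_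
  simp only [askeyIntegral_mul_pow_left hq hc hd ha hb]
  exact ((tendsto_qPoch hq _).mul (tendsto_qPoch hq _)).mul_const _

lemma qPochInf_mul_askeyIntegral_zero_zero (hq : ‖q‖ < 1) (hc : c ≠ 0) (hd : d ≠ 0)
    (ha : ∀ t ∈ qLattice q c d, qPochInf q (a * t) ≠ 0)
    (hb : ∀ t ∈ qLattice q c d, qPochInf q (b * t) ≠ 0) :
    qPochInf q (a * b * c * d) * askeyIntegral q 0 0 c d =
      qPochInf q (a * c) * qPochInf q (a * d) * (qPochInf q (b * c) * qPochInf q (b * d)) *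
        askeyIntegral q a b c d := by
  have hto0b := qPochInf_mul_askeyIntegral_zero_left hq hc hd ha hb
  have hto00 := qPochInf_mul_askeyIntegral_zero_left (b := 0) hq hc hd hb (by simp)
  simp only [mul_zero, zero_mul, qPochInf_zero_right, one_mul, askeyIntegral_comm q b 0] at hto00
  rw [hto00]
  linear_combination qPochInf q (b * c) * qPochInf q (b * d) * hto0b

lemma askeyIntegral_eq_zero_of_qPochInf_eq_zero (hq : ‖q‖ < 1) (hd : d ≠ 0)
    (ha : ∀ t ∈ qLattice q c d, qPochInf q (a * t) ≠ 0)
    (hb : ∀ t ∈ qLattice q c d, qPochInf q (b * t) ≠ 0) (hcd : qPochInf q (q * c / d) = 0) :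
    askeyIntegral q a b c d = 0 := by
  obtain ⟨m, hm⟩ := (qPochInf_eq_zero_iff hq).1 hcd
  obtain rfl : d = c * q ^ (m + 1) := by
    field_simp at hm
    rw [← hm]
    ring
  have weight_eq_zero (n : ℕ) (hn : n ∈ range (m + 1)) :
      askeyWeight q a b c (c * q ^ (m + 1)) (c * q ^ n) = 0 := by
    have hpole : qPochInf q (q * (c * q ^ n) / (c * q ^ (m + 1))) = 0 := by
      refine (qPochInf_eq_zero_iff hq).2 ⟨m - n, ?_⟩
      have hpow : q * q ^ n * q ^ (m - n) = q ^ (m + 1) := by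
        rw [← pow_succ', ← pow_add]
        congr 1
        grind
      rw [div_mul_eq_mul_div, div_eq_one_iff_eq hd]
      linear_combination c * hpow
    rw [askeyWeight, hpole, mul_zero, zero_div]
  rw [askeyIntegral, qIntegral_right_mul_pow hq (continuousOn_askeyWeight hq ha hb),
    sum_eq_zero fun n hn ↦ by rw [weight_eq_zero n hn, mul_zero, mul_zero], mul_zero, neg_zero]

lemma askeyIntegral_div_div (hq : ‖q‖ < 1)
    (hc : ∀ t ∈ qLattice q c d, qPochInf q (q / c * t) ≠ 0)
    (hd : ∀ t ∈ qLattice q c d, qPochInf q (q / d * t) ≠ 0) :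
    askeyIntegral q (q / c) (q / d) c d = d - c := by
  rw [askeyIntegral, ← qIntegral_one hq]
  refine qIntegral_congr fun t ht ↦ ?_
  rw [askeyWeight, mul_div_right_comm q t c, mul_div_right_comm q t d,
    div_self (mul_ne_zero (hc t ht) (hd t ht))]

lemma askeyIntegral_zero_zero (hq : ‖q‖ < 1) (hc : c ≠ 0) (hd : d ≠ 0) :
    askeyIntegral q 0 0 c d =
      d * (1 - q) * (qPochInf q q * qPochInf q (d * q / c) * qPochInf q (c / d)) := by
  have hstep : qPochInf q (c / d) = (1 - c / d) * qPochInf q (q * c / d) := by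
    rw [qPochInf_eq_one_sub_mul hq, mul_div_assoc]
  by_cases hdc : qPochInf q (d * q / c) = 0
  · rw [askeyIntegral_swap_endpoints, askeyIntegral_eq_zero_of_qPochInf_eq_zero hq hc (by simp)
      (by simp) (mul_comm d q ▸ hdc), hdc]
    ring
  by_cases hcd : qPochInf q (q * c / d) = 0
  · rw [askeyIntegral_eq_zero_of_qPochInf_eq_zero hq hd (by simp) (by simp) hcd, hstep, hcd]
    ring
  have hqq : qPochInf q q ≠ 0 := qPochInf_ne_zero_of_norm_lt_one hq hq
  have hqsq : qPochInf q q = (1 - q) * qPochInf q (q * q) := qPochInf_eq_one_sub_mul hq q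
  have hcc : q / c * c = q := div_mul_cancel₀ q hc
  have hdd : q / d * d = q := div_mul_cancel₀ q hd
  have hcd' : q / c * d = d * q / c := by ring
  have hdc' : q / d * c = q * c / d := by ring
  have hc_lat := forall_qPochInf_mul_ne_zero (a := q / c) (c := c) (d := d) hq
    (by rwa [hcc]) (by rwa [hcd'])
  have hd_lat := forall_qPochInf_mul_ne_zero (a := q / d) (c := c) (d := d) hq
    (by rwa [hdc']) (by rwa [hdd])
  have key := qPochInf_mul_askeyIntegral_zero_zero hq hc hd hc_lat hd_lat
  rw [askeyIntegral_div_div hq hc_lat hd_lat, hcc, hdd, hcd', hdc',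
    show q / c * (q / d) * c * d = q * q by field_simp] at key
  refine mul_left_cancel₀ (right_ne_zero_of_mul (hqsq ▸ hqq)) (key.trans ?_)
  rw [hstep, hqsq]
  field_simp

theorem andrews_askey_integral_general (hq : ‖q‖ < 1) (hc : c ≠ 0) (hd : d ≠ 0)
    (hac : qPochInf q (a * c) ≠ 0) (had : qPochInf q (a * d) ≠ 0)
    (hbc : qPochInf q (b * c) ≠ 0) (hbd : qPochInf q (b * d) ≠ 0) :
    qIntegral q
        (fun t => qPochInf q (q * t / c) * qPochInf q (q * t / d) /
          (qPochInf q (a * t) * qPochInf q (b * t))) c d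
      = d * (1 - q) *
          (qPochInf q q * qPochInf q (d * q / c) * qPochInf q (c / d) *
            qPochInf q (a * b * c * d)) /
          (qPochInf q (a * c) * qPochInf q (a * d) * qPochInf q (b * c) * qPochInf q (b * d)) := by
  have key := qPochInf_mul_askeyIntegral_zero_zero hq hc hd
    (forall_qPochInf_mul_ne_zero hq hac had) (forall_qPochInf_mul_ne_zero hq hbc hbd)
  rw [askeyIntegral_zero_zero hq hc hd] at key
  change askeyIntegral q a b c d = _
  rw [eq_div_iff (by simp [hac, had, hbc, hbd])]
  linear_combination -key

end AndrewsAskey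

theorem andrews_askey_integral (q : ℝ) (hq0 : 0 < q) (hq1 : q < 1) (a b c d : ℂ)
    (hc : c ≠ 0) (hd : d ≠ 0)
    (hac : ‖a * c‖ < 1) (had : ‖a * d‖ < 1) (hbc : ‖b * c‖ < 1) (hbd : ‖b * d‖ < 1) :
    qIntegral (q : ℂ)
        (fun t => qPochInf (q : ℂ) ((q : ℂ) * t / c) * qPochInf (q : ℂ) ((q : ℂ) * t / d) /
          (qPochInf (q : ℂ) (a * t) * qPochInf (q : ℂ) (b * t))) c d
      = d * (1 - (q : ℂ)) *
          (qPochInf (q : ℂ) (q : ℂ) * qPochInf (q : ℂ) (d * (q : ℂ) / c) *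
            qPochInf (q : ℂ) (c / d) * qPochInf (q : ℂ) (a * b * c * d)) /
          (qPochInf (q : ℂ) (a * c) * qPochInf (q : ℂ) (a * d) *
            qPochInf (q : ℂ) (b * c) * qPochInf (q : ℂ) (b * d)) := by
  have hq : ‖(q : ℂ)‖ < 1 := by rwa [Complex.norm_of_nonneg hq0.le]
  have ne_zero {x : ℂ} (hx : ‖x‖ < 1) := qPochInf_ne_zero_of_norm_lt_one hq hx
  exact andrews_askey_integral_general hq hc hd (ne_zero hac) (ne_zero had) (ne_zero hbc)
    (ne_zero hbd)
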